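/- Let (T_i)_{i=1}^∞ be an almost-commuting, submultiplicative sequence of bounded linear operators on a Banach space X over 𝕂 (𝕂 = ℝ or ℂ). The following are equivalent: (1) (T_i) has a mean Li-Yorke pair; (2) (T_i) has an absolutely mean semi-irregular vector; (3) (T_i) is mean Li-Yorke chaotic; (4) (T_i) has an absolutely mean irregular vector; (5) there exists a closed vector subspace X_0 of X, invariant under every T_i, such that the set of vectors of X_0 that are absolutely mean irregular for (T_i restricted to X_0) is residual in X_0. -/

import Mathlib

open Filter Topology

variable {𝕜 X Y : Type*} [RCLike 𝕜] [NormedAddCommGroup X] [NormedSpace 𝕜 X]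
  [NormedAddCommGroup Y] [NormedSpace 𝕜 Y]

/-- The Cesàro average `(1/n) ∑_{i=1}^{n} ‖T i x - T i y‖`. -/
noncomputable def mavg (T : ℕ → X →L[𝕜] Y) (x y : X) (n : ℕ) : ℝ :=
  (∑ i ∈ Finset.Icc 1 n, ‖T i x - T i y‖) / n

/-- The Cesàro average `(1/n) ∑_{i=1}^{n} ‖T i x‖`. -/
noncomputable def avg (T : ℕ → X →L[𝕜] Y) (x : X) (n : ℕ) : ℝ :=
  (∑ i ∈ Finset.Icc 1 n, ‖T i x‖) / n

/-- `limsup_n (1/n) ∑_{i=1}^{n} ‖T i x - T i y‖`, computed in `EReal`. -/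
noncomputable def msup (T : ℕ → X →L[𝕜] Y) (x y : X) : EReal :=
  Filter.limsup (fun n => (mavg T x y n : EReal)) Filter.atTop

/-- `liminf_n (1/n) ∑_{i=1}^{n} ‖T i x - T i y‖`, computed in `EReal`. -/
noncomputable def minf (T : ℕ → X →L[𝕜] Y) (x y : X) : EReal :=
  Filter.liminf (fun n => (mavg T x y n : EReal)) Filter.atTop

/-- `limsup_n (1/n) ∑_{i=1}^{n} ‖T i x‖`, computed in `EReal`. -/
noncomputable def asup (T : ℕ → X →L[𝕜] Y) (x : X) : EReal :=
  Filter.limsup (fun n => (avg T x n : EReal)) Filter.atTop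

/-- `liminf_n (1/n) ∑_{i=1}^{n} ‖T i x‖`, computed in `EReal`. -/
noncomputable def ainf (T : ℕ → X →L[𝕜] Y) (x : X) : EReal :=
  Filter.liminf (fun n => (avg T x n : EReal)) Filter.atTop

/-- `(T i)` is submultiplicative. -/
def Submultiplicative (T : ℕ → X →L[𝕜] X) : Prop :=
  ∃ C : ℝ, 0 < C ∧ ∀ z : X, ∀ i m : ℕ, 1 ≤ i → 1 ≤ m →
    ‖T (i + m) z‖ ≤ C * ‖T i (T m z)‖

/-- `(T i)` is almost-commuting. -/
def AlmostCommuting (T : ℕ → X →L[𝕜] X) : Prop :=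
  ∀ x : X, ∀ k : ℕ, 1 ≤ k →
    Filter.Tendsto (fun i => T i (T k x) - T k (T i x)) Filter.atTop (nhds 0)

/-!
Since `mavg T x y = avg T (x - y)`, a mean Li-Yorke pair is a semi-irregular vector in disguise.
Given a semi-irregular vector `x`, let `X₀` be the closure of the orbit of `x` under the algebra of
all operators that asymptotically commute with `(T i)`. Cesàro averaging the commutators shows that
every vector of this orbit inherits vanishing lower averages from `x`. Submultiplicativity bounds
the upper averages of all the vectors `T j x` from below by a common constant, while some of these
vectors are arbitrarily small; condensation of singularities then makes the averages of a generic
vector of `X₀` unbounded. In both cases the good vectors of `X₀` form a dense `Gδ` set.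
-/

section Condensation

theorem isGδ_setOf_frequently {α ι : Type*} [TopologicalSpace α] {l : Filter ι}
    [l.IsCountablyGenerated] {p : ι → α → Prop} (hp : ∀ i, IsOpen {a | p i a}) :
    IsGδ {a | ∃ᶠ i in l, p i a} := by
  obtain ⟨s, hs⟩ := l.exists_antitone_basis
  have h_eq : {a | ∃ᶠ i in l, p i a} = ⋂ k, ⋃ i ∈ s k, {a | p i a} := by
    ext a
    simp only [hs.toHasBasis.frequently_iff, Set.mem_ofPred_eq, Set.mem_iInter, Set.mem_iUnion,
      exists_prop, true_imp_iff]
  rw [h_eq]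
  exact .iInter_of_isOpen fun k => isOpen_biUnion fun i _ => hp i

variable {K E ι : Type*} [NontriviallyNormedField K] [AddCommGroup E] [Module K E]
  [TopologicalSpace E] [ContinuousAdd E] [ContinuousConstSMul K E] {l : Filter ι}
  {p : ι → Seminorm K E} {η : ℝ}

theorem dense_setOf_frequently_lt_seminorm (hη : 0 < η)
    (hp : ∃ᶠ z in 𝓝 (0 : E), ∃ᶠ i in l, η < p i z) (M : ℝ) :
    Dense {y | ∃ᶠ i in l, M < p i y} := by
  intro y
  by_cases hy : ∃ᶠ i in l, M < p i y
  · exact subset_closure hy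
  obtain ⟨a, ha⟩ := NormedField.exists_lt_norm K (2 * M / η)
  have h_tendsto : Tendsto (fun z : E => y + a • z) (𝓝 0) (𝓝 y) :=
    Continuous.tendsto' (by fun_prop) _ _ (by simp only [smul_zero, add_zero])
  refine mem_closure_iff_frequently.2 (h_tendsto.frequently (hp.mono fun z hz => ?_))
  refine (frequently_or_distrib.1 (hz.mono fun i hi => ?_)).resolve_left hy
  have h_large : 2 * M < p i (a • z) := calc
    2 * M < ‖a‖ * η := (div_lt_iff₀ hη).1 ha
    _ ≤ ‖a‖ * p i z := by gcongr
    _ = p i (a • z) := (map_smul_eq_mul (p i) a z).symm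
  have h_triangle : p i (a • z) ≤ p i (y + a • z) + p i y := by
    simpa only [add_sub_cancel_left] using map_sub_le_add (p i) (y + a • z) y
  by_contra! h
  linarith

theorem eventually_residual_frequently_lt_seminorm [l.IsCountablyGenerated]
    (hcont : ∀ i, Continuous (p i)) (hη : 0 < η)
    (hp : ∃ᶠ z in 𝓝 (0 : E), ∃ᶠ i in l, η < p i z) :
    ∀ᶠ y in residual E, ∀ M : ℝ, ∃ᶠ i in l, M < p i y := by
  have h_nat : ∀ᶠ y in residual E, ∀ k : ℕ, ∃ᶠ i in l, (k : ℝ) < p i y :=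
    eventually_countable_forall.2 fun k => residual_of_dense_Gδ
      (isGδ_setOf_frequently fun i => isOpen_lt continuous_const (hcont i))
      (dense_setOf_frequently_lt_seminorm hη hp k)
  filter_upwards [h_nat] with y hy M
  obtain ⟨k, hk⟩ := exists_nat_gt M
  exact (hy k).mono fun i => hk.trans

end Condensation

section Averages

variable (T : ℕ → X →L[𝕜] Y)

/-- The Cesàro average `avg T · n` as a seminorm, the form in which condensation of singularities
applies to it. -/
noncomputable def avgSeminorm (n : ℕ) : Seminorm 𝕜 X :=
  Seminorm.of (fun x => avg T x n)
    (fun x y => by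
      simp only [avg, ← add_div, ← Finset.sum_add_distrib, map_add]
      gcongr
      exact norm_add_le _ _)
    (fun c x => by simp only [avg, map_smul, norm_smul, ← Finset.mul_sum, mul_div_assoc])

theorem avg_nonneg (x : X) (n : ℕ) : 0 ≤ avg T x n :=
  apply_nonneg (avgSeminorm T n) x

theorem avg_smul (c : 𝕜) (x : X) (n : ℕ) : avg T (c • x) n = ‖c‖ * avg T x n :=
  map_smul_eq_mul (avgSeminorm T n) c x

theorem continuous_avg (n : ℕ) : Continuous fun x => avg T x n := by
  unfold avg
  fun_prop

theorem avg_eq_sum_range (x : X) (n : ℕ) :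
    avg T x n = (∑ i ∈ Finset.range n, ‖T (i + 1) x‖) / n := by
  rw [avg, Finset.range_eq_Ico, Finset.sum_Ico_add' (fun i => ‖T i x‖) 0 n 1]
  rfl

theorem mavg_eq_avg_sub (x y : X) : mavg T x y = avg T (x - y) := by
  funext n
  simp only [mavg, avg, map_sub]

variable {T} {x : X}

theorem ainf_eq_zero_iff : ainf T x = 0 ↔ ∀ ε : ℝ, 0 < ε → ∃ᶠ n in atTop, avg T x n < ε := by
  have h_nonneg : 0 ≤ ainf T x :=
    le_liminf_of_le (by isBoundedDefault)
      (Eventually.of_forall fun n => EReal.coe_nonneg.2 (avg_nonneg T x n))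
  rw [← h_nonneg.ge_iff_eq', ainf, liminf_le_iff]
  refine ⟨fun h ε hε => (h ε (EReal.coe_pos.2 hε)).mono fun n => EReal.coe_lt_coe_iff.1,
    fun h y hy => ?_⟩
  obtain ⟨ε, hε, hεy⟩ := EReal.lt_iff_exists_real_btwn.1 hy
  exact (h ε (EReal.coe_pos.1 hε)).mono fun n hn => (EReal.coe_lt_coe_iff.2 hn).trans hεy

theorem asup_eq_top_iff : asup T x = ⊤ ↔ ∀ M : ℝ, ∃ᶠ n in atTop, M < avg T x n := by
  rw [← top_le_iff, asup, le_limsup_iff]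
  refine ⟨fun h M => (h M (EReal.coe_lt_top M)).mono fun n => EReal.coe_lt_coe_iff.1,
    fun h y hy => ?_⟩
  obtain ⟨M, hyM, -⟩ := EReal.lt_iff_exists_real_btwn.1 hy
  exact (h M).mono fun n hn => hyM.trans (EReal.coe_lt_coe_iff.2 hn)

theorem exists_frequently_lt_avg (hx : 0 < asup T x) :
    ∃ δ : ℝ, 0 < δ ∧ ∃ᶠ n in atTop, δ < avg T x n := by
  obtain ⟨δ, hδ, hδx⟩ := EReal.lt_iff_exists_real_btwn.1 hx
  exact ⟨δ, EReal.coe_pos.1 hδ, (frequently_lt_of_lt_limsup (by isBoundedDefault) hδx).mono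
    fun n => EReal.coe_lt_coe_iff.1⟩

variable (T) in
theorem isGδ_setOf_ainf_eq_zero : IsGδ {x | ainf T x = 0} := by
  have h_eq : {x | ainf T x = 0} =
      ⋂ k : ℕ, {x | ∃ᶠ n in atTop, avg T x n < 1 / ((k : ℝ) + 1)} := by
    ext x
    simp only [Set.mem_ofPred_eq, Set.mem_iInter, ainf_eq_zero_iff]
    refine ⟨fun h k => h _ Nat.one_div_pos_of_nat, fun h ε hε => ?_⟩
    obtain ⟨k, hk⟩ := exists_nat_one_div_lt hε
    exact (h k).mono fun n hn => hn.trans hk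
  rw [h_eq]
  exact .iInter fun k => isGδ_setOf_frequently fun n =>
    isOpen_lt (continuous_avg T n) continuous_const

theorem ainf_eq_zero_of_avg_le {x' : X} {c : ℝ} {e : ℕ → ℝ} (he : Tendsto e atTop (𝓝 0))
    (h_le : ∀ n, avg T x' n ≤ c * avg T x n + e n) (hx : ainf T x = 0) : ainf T x' = 0 := by
  rw [ainf_eq_zero_iff] at hx ⊢
  intro ε hε
  have hc : 0 < |c| + 1 := by positivity
  have h_small := (hx (ε / 2 / (|c| + 1)) (by positivity)).and_eventually
    (he.eventually_lt_const (half_pos hε))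
  refine h_small.mono fun n ⟨hn, hen⟩ => ?_
  calc
    avg T x' n ≤ c * avg T x n + e n := h_le n
    _ ≤ (|c| + 1) * avg T x n + e n := by
      gcongr
      · exact avg_nonneg T x n
      · linarith [le_abs_self c]
    _ < ε / 2 + ε / 2 := add_lt_add ((lt_div_iff₀' hc).1 hn) hen
    _ = ε := add_halves ε

theorem exists_norm_apply_lt_of_ainf_eq_zero (hx : ainf T x = 0) {ε : ℝ} (hε : 0 < ε) :
    ∃ j, 1 ≤ j ∧ ‖T j x‖ < ε := by
  obtain ⟨n, hn, h_pos⟩ :=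
    ((ainf_eq_zero_iff.1 hx ε hε).and_eventually (eventually_gt_atTop 0)).exists
  by_contra! h
  have h_sum : n • ε ≤ ∑ i ∈ Finset.Icc 1 n, ‖T i x‖ := by
    simpa only [Nat.card_Icc, Nat.add_sub_cancel] using
      Finset.card_nsmul_le_sum (Finset.Icc 1 n) (fun i => ‖T i x‖) ε
        fun i hi => h i (Finset.mem_Icc.1 hi).1
  rw [avg, div_lt_iff₀' (Nat.cast_pos.2 h_pos), ← nsmul_eq_mul] at hn
  exact hn.not_ge h_sum

end Averages

section Irregular

variable (T : ℕ → X →L[𝕜] Y)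

/-- `(x, y)` is a mean Li-Yorke pair for `(T i)`. -/
def IsMeanLiYorkePair (x y : X) : Prop := minf T x y = 0 ∧ 0 < msup T x y

/-- `x` is an absolutely mean semi-irregular vector for `(T i)`. -/
def IsAbsMeanSemiIrregular (x : X) : Prop := ainf T x = 0 ∧ 0 < asup T x

/-- `x` is an absolutely mean irregular vector for `(T i)`; unboundedness of the averages is
expressed by an infinite limsup. -/
def IsAbsMeanIrregular (x : X) : Prop := ainf T x = 0 ∧ asup T x = ⊤

variable {T} {x y : X}

theorem isMeanLiYorkePair_iff : IsMeanLiYorkePair T x y ↔ IsAbsMeanSemiIrregular T (x - y) := by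
  simp only [IsMeanLiYorkePair, IsAbsMeanSemiIrregular, minf, msup, ainf, asup, mavg_eq_avg_sub]

namespace IsAbsMeanIrregular

theorem isAbsMeanSemiIrregular (hx : IsAbsMeanIrregular T x) : IsAbsMeanSemiIrregular T x :=
  ⟨hx.1, hx.2 ▸ EReal.zero_lt_top⟩

theorem ne_zero (hx : IsAbsMeanIrregular T x) : x ≠ 0 := by
  rintro rfl
  obtain ⟨n, hn⟩ := (asup_eq_top_iff.1 hx.2 0).exists
  exact hn.ne' (map_zero (avgSeminorm T n))

theorem smul (hx : IsAbsMeanIrregular T x) {c : 𝕜} (hc : c ≠ 0) :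
    IsAbsMeanIrregular T (c • x) := by
  refine ⟨ainf_eq_zero_of_avg_le tendsto_const_nhds
    (fun n => (avg_smul T c x n).trans_le (add_zero _).ge) hx.1, asup_eq_top_iff.2 fun M => ?_⟩
  refine (asup_eq_top_iff.1 hx.2 (M / ‖c‖)).mono fun n hn => ?_
  rw [avg_smul]
  exact (div_lt_iff₀' (norm_pos_iff.2 hc)).1 hn

theorem isMeanLiYorkePair_of_mem_span (hx : IsAbsMeanIrregular T x) {u v : X}
    (hu : u ∈ Submodule.span 𝕜 {x}) (hv : v ∈ Submodule.span 𝕜 {x}) (huv : u ≠ v) :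
    IsMeanLiYorkePair T u v := by
  obtain ⟨c, hc⟩ := Submodule.mem_span_singleton.1 (sub_mem hu hv)
  have hc_ne : c ≠ 0 := by
    rintro rfl
    exact huv (sub_eq_zero.1 (hc.symm.trans (zero_smul 𝕜 x)))
  rw [isMeanLiYorkePair_iff, ← hc]
  exact (hx.smul hc_ne).isAbsMeanSemiIrregular

end IsAbsMeanIrregular

end Irregular

theorem not_countable_span_singleton {K E : Type*} [NontriviallyNormedField K] [CompleteSpace K]
    [AddCommGroup E] [Module K E] {x : E} (hx : x ≠ 0) :
    ¬ (Submodule.span K {x} : Set E).Countable := by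
  have : Nontrivial (Submodule.span K {x}) :=
    Submodule.nontrivial_iff_ne_bot.2 (Submodule.span_singleton_eq_bot.not.2 hx)
  rw [← Cardinal.le_aleph0_iff_set_countable, not_le]
  exact Cardinal.aleph0_lt_continuum.trans_le
    (continuum_le_cardinal_of_module K (Submodule.span K {x}))

section CyclicSubspace

variable {R M : Type*} [CommSemiring R] [AddCommGroup M] [Module R M] [TopologicalSpace M]
  [IsTopologicalAddGroup M] [ContinuousConstSMul R M]

/-- The closure of the orbit of `x` under a subalgebra `A` of operators: the smallest closed
`A`-invariant subspace containing `x`. -/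
def closedCyclicSubspace (A : Subalgebra R (M →L[R] M)) (x : M) : Submodule R M :=
  ((Subalgebra.toSubmodule A).map
    (LinearMap.applyₗ x ∘ₗ ContinuousLinearMap.coeLM R)).topologicalClosure

variable {A : Subalgebra R (M →L[R] M)} {x y : M} {S : M →L[R] M}

theorem apply_mem_closedCyclicSubspace (hS : S ∈ A) : S x ∈ closedCyclicSubspace A x :=
  subset_closure (Set.mem_image_of_mem _ hS)

theorem map_mem_closedCyclicSubspace (hS : S ∈ A) (hy : y ∈ closedCyclicSubspace A x) :
    S y ∈ closedCyclicSubspace A x := by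
  refine map_mem_closure S.continuous hy ?_
  rintro _ ⟨S', hS', rfl⟩
  exact ⟨S * S', A.mul_mem hS hS', rfl⟩

end CyclicSubspace

section AlmostCommutant

variable (T : ℕ → X →L[𝕜] X)

/-- The algebra of all operators that asymptotically commute, pointwise, with `(T i)`. -/
def almostCommutant : Subalgebra 𝕜 (X →L[𝕜] X) where
  carrier := {S | ∀ x, Tendsto (fun i => T i (S x) - S (T i x)) atTop (𝓝 0)}
  algebraMap_mem' c x := by
    simp only [Algebra.algebraMap_eq_smul_one, smul_apply,
      one_apply_eq_self, map_smul, sub_self, tendsto_const_nhds]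
  add_mem' {S S'} hS hS' x := by
    refine Tendsto.congr (fun i => ?_) (add_zero (0 : X) ▸ (hS x).add (hS' x))
    simp only [add_apply, map_add]
    abel
  mul_mem' {S S'} hS hS' x := by
    have h_image : Tendsto (fun i => S (T i (S' x) - S' (T i x))) atTop (𝓝 0) :=
      (S.continuous.tendsto' 0 0 (map_zero S)).comp (hS' x)
    refine Tendsto.congr (fun i => ?_) (add_zero (0 : X) ▸ (hS (S' x)).add h_image)
    simp only [mul_apply_eq_comp, map_sub, sub_add_sub_cancel]

variable {T} {x : X} {S : X →L[𝕜] X}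

theorem AlmostCommuting.mem_almostCommutant (hT : AlmostCommuting T) {k : ℕ} (hk : 1 ≤ k) :
    T k ∈ almostCommutant T :=
  fun x => hT x k hk

variable (T x S) in
theorem avg_apply_le (n : ℕ) :
    avg T (S x) n ≤ ‖S‖ * avg T x n +
      (n : ℝ)⁻¹ * ∑ i ∈ Finset.range n, ‖T (i + 1) (S x) - S (T (i + 1) x)‖ := by
  rw [avg_eq_sum_range, avg_eq_sum_range, ← mul_div_assoc, inv_mul_eq_div, ← add_div,
    Finset.mul_sum, ← Finset.sum_add_distrib]
  gcongr with i
  calc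
    ‖T (i + 1) (S x)‖ ≤ ‖S (T (i + 1) x)‖ + ‖T (i + 1) (S x) - S (T (i + 1) x)‖ :=
      norm_le_norm_add_norm_sub' _ _
    _ ≤ ‖S‖ * ‖T (i + 1) x‖ + ‖T (i + 1) (S x) - S (T (i + 1) x)‖ := by
      gcongr
      exact S.le_opNorm _

theorem ainf_apply_eq_zero (hS : Tendsto (fun i => T i (S x) - S (T i x)) atTop (𝓝 0))
    (hx : ainf T x = 0) : ainf T (S x) = 0 := by
  have h_norm : Tendsto (fun i => ‖T (i + 1) (S x) - S (T (i + 1) x)‖) atTop (𝓝 0) :=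
    (tendsto_zero_iff_norm_tendsto_zero.1 hS).comp (tendsto_add_atTop_nat 1)
  exact ainf_eq_zero_of_avg_le h_norm.cesaro (avg_apply_le T x S) hx

theorem dense_setOf_ainf_eq_zero (hx : ainf T x = 0) :
    Dense {y : closedCyclicSubspace (almostCommutant T) x | ainf T (y : X) = 0} := by
  refine Subtype.dense_iff.2 (closure_mono ?_)
  rintro _ ⟨S, hS, rfl⟩
  exact ⟨⟨S x, apply_mem_closedCyclicSubspace hS⟩, ainf_apply_eq_zero (hS x) hx, rfl⟩

end AlmostCommutant

section Submultiplicative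

variable {T : ℕ → X →L[𝕜] X} {x : X}

theorem avg_le_add_mul_avg_apply {C : ℝ} {j : ℕ}
    (hC : ∀ i, 1 ≤ i → ‖T (i + j) x‖ ≤ C * ‖T i (T j x)‖) (n : ℕ) :
    avg T x n ≤ (∑ i ∈ Finset.range j, ‖T (i + 1) x‖) / n + C * avg T (T j x) n := by
  rw [avg_eq_sum_range, avg_eq_sum_range, ← mul_div_assoc, ← add_div, Finset.mul_sum]
  gcongr
  calc
    ∑ i ∈ Finset.range n, ‖T (i + 1) x‖ ≤ ∑ i ∈ Finset.range (j + n), ‖T (i + 1) x‖ := by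
      gcongr
      exact Nat.le_add_left n j
    _ = ∑ i ∈ Finset.range j, ‖T (i + 1) x‖ + ∑ i ∈ Finset.range n, ‖T (i + 1 + j) x‖ := by
      rw [Finset.sum_range_add]
      simp only [add_comm j, add_right_comm]
    _ ≤ _ := by
      gcongr with i
      exact hC (i + 1) (Nat.le_add_left 1 i)

namespace Submultiplicative

theorem exists_forall_frequently_lt_avg_apply (hT : Submultiplicative T) (hx : 0 < asup T x) :
    ∃ η : ℝ, 0 < η ∧ ∀ j, 1 ≤ j → ∃ᶠ n in atTop, η < avg T (T j x) n := by
  obtain ⟨C, hC, hT⟩ := hT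
  obtain ⟨δ, hδ, h_freq⟩ := exists_frequently_lt_avg hx
  refine ⟨δ / 2 / C, by positivity, fun j hj => ?_⟩
  have h_head := (tendsto_const_div_atTop_nhds_zero_nat
    (∑ i ∈ Finset.range j, ‖T (i + 1) x‖)).eventually_lt_const (half_pos hδ)
  refine (h_freq.and_eventually h_head).mono fun n ⟨hn, hn_head⟩ => ?_
  rw [div_lt_iff₀' hC]
  linarith only [hn, hn_head, avg_le_add_mul_avg_apply (fun i hi => hT x i j hi hj) n]

theorem eventually_residual_asup_eq_top (hT : Submultiplicative T)
    (hx : IsAbsMeanSemiIrregular T x) {Z : Submodule 𝕜 X} (hZ : ∀ j, 1 ≤ j → T j x ∈ Z) :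
    ∀ᶠ y : Z in residual Z, asup T (y : X) = ⊤ := by
  obtain ⟨η, hη, h_freq⟩ := hT.exists_forall_frequently_lt_avg_apply hx.2
  let p (n : ℕ) : Seminorm 𝕜 Z := (avgSeminorm T n).comp Z.subtype
  have hp_cont (n : ℕ) : Continuous (p n) := (continuous_avg T n).comp continuous_subtype_val
  have hp_zero : ∃ᶠ z in 𝓝 (0 : Z), ∃ᶠ n in atTop, η < p n z := by
    refine Metric.nhds_basis_ball.frequently_iff.2 fun r hr => ?_
    obtain ⟨j, hj, h_lt⟩ := exists_norm_apply_lt_of_ainf_eq_zero hx.1 hr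
    exact ⟨⟨T j x, hZ j hj⟩, mem_ball_zero_iff.2 h_lt, h_freq j hj⟩
  filter_upwards [eventually_residual_frequently_lt_seminorm hp_cont hη hp_zero] with y hy
  exact asup_eq_top_iff.2 hy

end Submultiplicative

end Submultiplicative

theorem IsAbsMeanSemiIrregular.eventually_residual_isAbsMeanIrregular {T : ℕ → X →L[𝕜] X}
    {x : X} (hx : IsAbsMeanSemiIrregular T x) (hac : AlmostCommuting T)
    (hsub : Submultiplicative T) :
    ∀ᶠ y : closedCyclicSubspace (almostCommutant T) x in residual _,
      IsAbsMeanIrregular T (y : X) :=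
  have h_inf := residual_of_dense_Gδ
    ((isGδ_setOf_ainf_eq_zero T).preimage continuous_subtype_val) (dense_setOf_ainf_eq_zero hx.1)
  have h_sup := hsub.eventually_residual_asup_eq_top hx fun _ hj =>
    apply_mem_closedCyclicSubspace (hac.mem_almostCommutant hj)
  Filter.Eventually.and h_inf h_sup

/-- **Characterizations of mean Li-Yorke chaos** for an almost-commuting,
submultiplicative sequence of bounded linear operators on a Banach space. -/
theorem meanLiYorkeChaotic_tfae_of_almostCommuting_submultiplicative
    [CompleteSpace X] (T : ℕ → X →L[𝕜] X)
    (hac : AlmostCommuting T) (hsub : Submultiplicative T) :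
    List.TFAE [
      ∃ x y : X, minf T x y = 0 ∧ 0 < msup T x y,
      ∃ x : X, ainf T x = 0 ∧ 0 < asup T x,
      ∃ K : Set X, ¬ K.Countable ∧
        ∀ x ∈ K, ∀ y ∈ K, x ≠ y → (minf T x y = 0 ∧ 0 < msup T x y),
      ∃ x : X, ainf T x = 0 ∧ asup T x = ⊤,
      ∃ X₀ : Submodule 𝕜 X, IsClosed (X₀ : Set X) ∧
        (∀ k : ℕ, 1 ≤ k → ∀ x ∈ X₀, T k x ∈ X₀) ∧
        {x : X₀ | ainf T (x : X) = 0 ∧ asup T (x : X) = ⊤} ∈ residual X₀] := by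
  tfae_have 1 → 2 := fun ⟨x, y, hxy⟩ => ⟨x - y, isMeanLiYorkePair_iff.1 hxy⟩
  tfae_have 2 → 5 := fun ⟨x, hx⟩ =>
    ⟨closedCyclicSubspace (almostCommutant T) x, isClosed_closure,
      fun _ hk _ => map_mem_closedCyclicSubspace (hac.mem_almostCommutant hk),
      IsAbsMeanSemiIrregular.eventually_residual_isAbsMeanIrregular hx hac hsub⟩
  tfae_have 5 → 4 := by
    rintro ⟨X₀, h_closed, -, h_residual⟩
    have : CompleteSpace X₀ := h_closed.completeSpace_coe
    obtain ⟨x, hx⟩ := (dense_of_mem_residual h_residual).nonempty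
    exact ⟨x, hx⟩
  tfae_have 4 → 3 := fun ⟨x, hx⟩ =>
    ⟨Submodule.span 𝕜 {x}, not_countable_span_singleton (IsAbsMeanIrregular.ne_zero hx),
      fun _ hu _ hv => IsAbsMeanIrregular.isMeanLiYorkePair_of_mem_span hx hu hv⟩
  tfae_have 3 → 1 := by
    rintro ⟨K, hK, h_pairs⟩
    obtain ⟨x, hx, y, hy, hxy⟩ := Set.not_subsingleton_iff.1 fun hs => hK hs.countable
    exact ⟨x, y, h_pairs x hx y hy hxy⟩
  tfae_finish
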